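/- arXiv:0704.2576 — 4 statements merged into one kernel-verified Lean document; each statement's English description precedes it below -/
import Mathlib

section
/- Let M be a model category and A a cofibrant object of M. Let C, with structure maps (i₀, i₁) : A ⊔ A → C and p : C → A, and C′, with structure maps (i₀′, i₁′) : A ⊔ A → C′ and p′ : C′ → A, be two cylinder objects for A. Form the pushout C″ of i₁ : A → C and i₀′ : A → C′. Then C″, equipped with the map A ⊔ A → C″ whose components are the composites A → C → C″ (via i₀) and A → C′ → C″ (via i₁′), together with the map C″ → A induced by p and p′, is again a cylinder object for A. -/
open CategoryTheory CategoryTheory.Limits CategoryTheory.MonoidalCategory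

universe v u v₂ u₂

namespace Paper

variable {C : Type u} [Category.{v} C]

/-- `f` is a retract of `g` in the arrow category. -/
def IsRetractOf {A B X Y : C} (f : A ⟶ B) (g : X ⟶ Y) : Prop :=
  ∃ (iA : A ⟶ X) (rA : X ⟶ A) (iB : B ⟶ Y) (rB : Y ⟶ B),
    iA ≫ rA = 𝟙 A ∧ iB ≫ rB = 𝟙 B ∧ iA ≫ g = f ≫ iB ∧ rA ≫ f = g ≫ rB

/-- The class of maps having the left lifting property with respect to every map in `T`. -/
def LLP (T : MorphismProperty C) : MorphismProperty C := fun _ _ i =>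
  ∀ ⦃X Y : C⦄ (p : X ⟶ Y), T p → HasLiftingProperty i p

/-- The class of maps having the right lifting property with respect to every map in `T`. -/
def RLP (T : MorphismProperty C) : MorphismProperty C := fun _ _ p =>
  ∀ ⦃A B : C⦄ (i : A ⟶ B), T i → HasLiftingProperty i p

/-- A model structure on a category: weak equivalences, cofibrations and fibrations,
satisfying the usual axioms (two-out-of-three, retracts, lifting, factorization).
Completeness and cocompleteness are imposed separately. -/
structure ModelStructure (C : Type u) [Category.{v} C] where
  W : MorphismProperty C
  Cof : MorphismProperty C
  Fib : MorphismProperty C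
  two_out_of_three : ∀ ⦃X Y Z : C⦄ (f : X ⟶ Y) (g : Y ⟶ Z),
      (W f → W g → W (f ≫ g)) ∧ (W f → W (f ≫ g) → W g) ∧ (W g → W (f ≫ g) → W f)
  retract_W : ∀ ⦃A B X Y : C⦄ {f : A ⟶ B} {g : X ⟶ Y}, IsRetractOf f g → W g → W f
  retract_Cof : ∀ ⦃A B X Y : C⦄ {f : A ⟶ B} {g : X ⟶ Y}, IsRetractOf f g → Cof g → Cof f
  retract_Fib : ∀ ⦃A B X Y : C⦄ {f : A ⟶ B} {g : X ⟶ Y}, IsRetractOf f g → Fib g → Fib f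
  lift_Cof_TrivFib : ∀ ⦃A B X Y : C⦄ (i : A ⟶ B) (p : X ⟶ Y),
      Cof i → Fib p → W p → HasLiftingProperty i p
  lift_TrivCof_Fib : ∀ ⦃A B X Y : C⦄ (i : A ⟶ B) (p : X ⟶ Y),
      Cof i → W i → Fib p → HasLiftingProperty i p
  factor_Cof_TrivFib : ∀ ⦃X Y : C⦄ (f : X ⟶ Y),
      ∃ (Z : C) (i : X ⟶ Z) (p : Z ⟶ Y), Cof i ∧ Fib p ∧ W p ∧ i ≫ p = f
  factor_TrivCof_Fib : ∀ ⦃X Y : C⦄ (f : X ⟶ Y),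
      ∃ (Z : C) (i : X ⟶ Z) (p : Z ⟶ Y), Cof i ∧ W i ∧ Fib p ∧ i ≫ p = f

namespace ModelStructure

variable (M : ModelStructure C)

/-- Trivial cofibrations. -/
def TrivCof : MorphismProperty C := fun _ _ f => M.Cof f ∧ M.W f

/-- Trivial fibrations. -/
def TrivFib : MorphismProperty C := fun _ _ f => M.Fib f ∧ M.W f

/-- An object is cofibrant if the map from the initial object is a cofibration. -/
def Cofibrant [HasInitial C] (X : C) : Prop := M.Cof (initial.to X)

/-- An object is fibrant if the map to the terminal object is a fibration. -/
def Fibrant [HasTerminal C] (X : C) : Prop := M.Fib (terminal.from X)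

end ModelStructure

/-- A cylinder object for `X`: a factorization of the fold map `X ⊔ X → X` into a
cofibration `(i₀, i₁)` followed by a weak equivalence `p`. -/
structure IsCylinder [HasBinaryCoproducts C] (M : ModelStructure C) (X Cyl : C)
    (i₀ i₁ : X ⟶ Cyl) (p : Cyl ⟶ X) : Prop where
  cof : M.Cof (coprod.desc i₀ i₁)
  weq : M.W p
  comp₀ : i₀ ≫ p = 𝟙 X
  comp₁ : i₁ ≫ p = 𝟙 X

section Monoidal

variable [MonoidalCategory C]

/-- The pushout product of `i : A ⟶ B` and `j : X ⟶ Y`: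
the induced map `(B ⊗ X) ⊔_{A ⊗ X} (A ⊗ Y) ⟶ B ⊗ Y`. -/
noncomputable def pushoutProduct {A B X Y : C} (i : A ⟶ B) (j : X ⟶ Y)
    [HasPushout (i ▷ X) (A ◁ j)] :
    pushout (i ▷ X) (A ◁ j) ⟶ B ⊗ Y :=
  pushout.desc (B ◁ j) (i ▷ Y) (whisker_exchange i j).symm

/-- The pushout-product axiom for a model structure on a monoidal category: the pushout
product of two cofibrations is a cofibration, which is trivial if one of the two is. -/
def PushoutProductAxiom [HasPushouts C] (M : ModelStructure C) : Prop :=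
  ∀ ⦃A B X Y : C⦄ (i : A ⟶ B) (j : X ⟶ Y), M.Cof i → M.Cof j →
    M.Cof (pushoutProduct i j) ∧
      (M.W i → M.W (pushoutProduct i j)) ∧ (M.W j → M.W (pushoutProduct i j))

/-- The pullback-hom map `[B, X] ⟶ [B, Y] ×_{[A, Y]} [A, X]` induced by `j : A ⟶ B`
and `p : X ⟶ Y` via the internal hom. -/
noncomputable def pullbackHom [MonoidalClosed C] {A B X Y : C} (j : A ⟶ B) (p : X ⟶ Y)
    [HasPullback ((MonoidalClosed.pre j).app Y) ((ihom A).map p)] :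
    (ihom B).obj X ⟶ pullback ((MonoidalClosed.pre j).app Y) ((ihom A).map p) :=
  pullback.lift ((ihom B).map p) ((MonoidalClosed.pre j).app X)
    ((MonoidalClosed.pre j).naturality p)

/-- Two maps `f g : X ⟶ Y` are `V`-homotopic if there are a cylinder object `CS` for the
monoidal unit and a homotopy `H : CS ⊗ X ⟶ Y` connecting them. -/
def VHomotopic [HasBinaryCoproducts C] (M : ModelStructure C) {X Y : C} (f g : X ⟶ Y) : Prop :=
  ∃ (CS : C) (i₀ i₁ : 𝟙_ C ⟶ CS) (p : CS ⟶ 𝟙_ C) (_ : IsCylinder M (𝟙_ C) CS i₀ i₁ p)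
    (H : CS ⊗ X ⟶ Y),
      (λ_ X).inv ≫ i₀ ▷ X ≫ H = f ∧ (λ_ X).inv ≫ i₁ ▷ X ≫ H = g

end Monoidal

/-- Two maps `f g : X ⟶ Y` are left homotopic if there are a cylinder object `CX` for `X`
and a homotopy `H : CX ⟶ Y` connecting them. -/
def LeftHomotopic [HasBinaryCoproducts C] (M : ModelStructure C) {X Y : C} (f g : X ⟶ Y) : Prop :=
  ∃ (CX : C) (i₀ i₁ : X ⟶ CX) (p : CX ⟶ X) (_ : IsCylinder M X CX i₀ i₁ p) (H : CX ⟶ Y),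
    i₀ ≫ H = f ∧ i₁ ≫ H = g

/-- An object `A` is finitely presentable if `Hom(A, –)` preserves (small) filtered colimits. -/
def FinitelyPresentable (A : C) : Prop :=
  ∀ (J : Type v) (_ : SmallCategory J), IsFiltered J →
    Nonempty (PreservesColimitsOfShape J (coyoneda.obj (Opposite.op A)))

section Cell

/-- The restriction of a diagram `F : β ⥤ C` to the elements below `b`. -/
def restrictIio {β : Type v} [Preorder β] (F : β ⥤ C) (b : β) : Set.Iio b ⥤ C where
  obj a := F.obj a.1
  map {a a'} h := F.map (homOfLE (leOfHom h : a.1 ≤ a'.1))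
  map_id a := F.map_id a.1
  map_comp f g := by rw [← F.map_comp]; rfl

/-- The canonical cocone on the restriction of `F` below `b`, with point `F.obj b`. -/
def coconeIio {β : Type v} [Preorder β] (F : β ⥤ C) (b : β) : Cocone (restrictIio F b) where
  pt := F.obj b
  ι :=
    { app := fun a => F.map (homOfLE a.2.le)
      naturality := fun a a' h => by
        dsimp [restrictIio]
        rw [Category.comp_id, ← F.map_comp]
        rfl }

/-- A bundled well-ordered index type with a bottom element and successors. -/
class WellOrderedBot (β : Type v) extends LinearOrder β, OrderBot β, SuccOrder β where
  wf : WellFoundedLT β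

/-- `f` is a transfinite composition of maps in `R`: there is a continuous (smooth at limit
stages) diagram indexed by a well-ordered set, whose successor maps lie in `R`, such that `f`
is (isomorphic to) the map from the bottom stage into the colimit. -/
def IsTransfiniteCompositionOf (R : MorphismProperty C) : MorphismProperty C := fun X Y f =>
  ∃ (β : Type v) (_ : WellOrderedBot β) (F : β ⥤ C) (c : Cocone F) (_ : IsColimit c)
    (e₀ : X ≅ F.obj ⊥) (e₁ : c.pt ≅ Y),
      (∀ b : β, ¬IsMax b → R (F.map (homOfLE (Order.le_succ b)))) ∧
      (∀ b : β, Order.IsSuccLimit b → Nonempty (IsColimit (coconeIio F b))) ∧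
      f = e₀.hom ≫ c.ι.app ⊥ ≫ e₁.hom

/-- Cobase changes (pushouts) of maps in `R`. -/
def CobaseChangeOf (R : MorphismProperty C) : MorphismProperty C := fun X Y f =>
  ∃ (A B : C) (r : A ⟶ B) (t : A ⟶ X) (b : B ⟶ Y), R r ∧ IsPushout t r f b

/-- `R`-cell: transfinite compositions of cobase changes of maps in `R`. -/
def Cell (R : MorphismProperty C) : MorphismProperty C :=
  IsTransfiniteCompositionOf (CobaseChangeOf R)

/-- The class of maps of the form `r ▷ Q = r ⊗ id_Q`, for `r` in `R` and `Q` an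
arbitrary object. -/
inductive TensorObjAux [MonoidalCategory C] (R : MorphismProperty C) : ∀ (X Y : C), (X ⟶ Y) → Prop
  | mk {A B : C} (r : A ⟶ B) (Q : C) (hr : R r) : TensorObjAux R (A ⊗ Q) (B ⊗ Q) (r ▷ Q)

/-- The class `R ⊗ Ob(C)` of maps `r ⊗ id_Q` with `r ∈ R`. -/
def tensorWithObjects [MonoidalCategory C] (R : MorphismProperty C) : MorphismProperty C :=
  fun X Y f => TensorObjAux R X Y f

/-- A monoidal model category is strongly left proper if the cobase change of a weak
equivalence along any map in `(cof ⊗ Ob(V))`-cell is a weak equivalence. -/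
def StronglyLeftProper [MonoidalCategory C] (M : ModelStructure C) : Prop :=
  ∀ ⦃A B A' B' : C⦄ (w : A ⟶ B) (g : A ⟶ A') (g' : B ⟶ B') (w' : A' ⟶ B'),
    M.W w → Cell (tensorWithObjects M.Cof) g → IsPushout w g g' w' → M.W w'

end Cell

end Paper

/-- A retract diagram in the arrow category gives a retract in the sense of the paper. -/
theorem isRetractOf_of_retractArrow {M : Type u} [Category.{v} M] {A B X Y : M}
    {f : A ⟶ B} {g : X ⟶ Y} (h : RetractArrow f g) : Paper.IsRetractOf f g :=
  ⟨h.i.left, h.r.left, h.i.right, h.r.right, h.retract_left, h.retract_right, h.i_w, h.r_w⟩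

/-- The Mathlib model category attached to a model structure. -/
@[reducible]
def toModelCategory {M : Type u} [Category.{v} M] [Limits.HasLimits M] [Limits.HasColimits M]
    (m : Paper.ModelStructure M) : HomotopicalAlgebra.ModelCategory M where
  categoryWithFibrations := ⟨m.Fib⟩
  categoryWithCofibrations := ⟨m.Cof⟩
  categoryWithWeakEquivalences := ⟨m.W⟩
  cm2 :=
    { comp_mem := fun f g hf hg => (m.two_out_of_three f g).1 hf hg
      of_postcomp := fun f g hg hfg => (m.two_out_of_three f g).2.2 hg hfg
      of_precomp := fun f g hf hfg => (m.two_out_of_three f g).2.1 hf hfg }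
  cm3a := ⟨fun h hg => m.retract_W (isRetractOf_of_retractArrow h) hg⟩
  cm3b := ⟨fun h hg => m.retract_Fib (isRetractOf_of_retractArrow h) hg⟩
  cm3c := ⟨fun h hg => m.retract_Cof (isRetractOf_of_retractArrow h) hg⟩
  cm4a := fun i p hi hw hp => m.lift_TrivCof_Fib i p hi.mem hw.mem hp.mem
  cm4b := fun i p hi hp hw => m.lift_Cof_TrivFib i p hi.mem hp.mem hw.mem
  cm5a := ⟨fun f => by
    obtain ⟨Z, i, p, hi, hw, hp, fac⟩ := m.factor_TrivCof_Fib f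
    exact ⟨⟨Z, i, p, fac, ⟨hi, hw⟩, hp⟩⟩⟩
  cm5b := ⟨fun f => by
    obtain ⟨Z, i, p, hi, hp, hw, fac⟩ := m.factor_Cof_TrivFib f
    exact ⟨⟨Z, i, p, fac, hi, ⟨hp, hw⟩⟩⟩⟩

/-- Gluing two cylinder objects for a cofibrant object `A` along the end of the
first and the beginning of the second yields again a cylinder object for `A`. -/
theorem statement5 {M : Type u} [Category.{v} M] [Limits.HasLimits M] [Limits.HasColimits M]
    (m : Paper.ModelStructure M) {A : M} (hA : m.Cofibrant A)
    (Cyl Cyl' : M) (i₀ i₁ : A ⟶ Cyl) (p : Cyl ⟶ A) (i₀' i₁' : A ⟶ Cyl') (p' : Cyl' ⟶ A)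
    (h : Paper.IsCylinder m A Cyl i₀ i₁ p) (h' : Paper.IsCylinder m A Cyl' i₀' i₁' p') :
    Paper.IsCylinder m A (Limits.pushout i₁ i₀')
      (i₀ ≫ Limits.pushout.inl i₁ i₀') (i₁' ≫ Limits.pushout.inr i₁ i₀')
      (Limits.pushout.desc p p' (h.comp₁.trans h'.comp₀.symm)) := by
  letI := toModelCategory m
  haveI : HomotopicalAlgebra.IsCofibrant A := ⟨hA⟩
  let P : HomotopicalAlgebra.Cylinder A :=
    { I := Cyl, i₀ := i₀, i₁ := i₁, π := p, i₀_π := h.comp₀, i₁_π := h.comp₁,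
      weakEquivalence_π := ⟨h.weq⟩ }
  let P' : HomotopicalAlgebra.Cylinder A :=
    { I := Cyl', i₀ := i₀', i₁ := i₁', π := p', i₀_π := h'.comp₀, i₁_π := h'.comp₁,
      weakEquivalence_π := ⟨h'.weq⟩ }
  haveI : P.IsGood := ⟨⟨h.cof⟩⟩
  haveI : P'.IsGood := ⟨⟨h'.cof⟩⟩
  have hG : (P.trans P').IsGood := inferInstance
  exact
    { cof := hG.cofibration_i.mem
      weq := (P.trans P').weakEquivalence_π.mem
      comp₀ := (P.trans P').i₀_π
      comp₁ := (P.trans P').i₁_π }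
end

section
/- (Dugger's lemma) Let M and N be model categories and let L : M → N and R : N → M be an adjoint pair of functors, with L left adjoint to R. Then the following are equivalent: (i) L preserves cofibrations and trivial cofibrations (i.e. (L, R) is a Quillen pair); (ii) L preserves cofibrations between cofibrant objects and preserves all trivial cofibrations; (iii) R preserves fibrations between fibrant objects and preserves all trivial fibrations. -/
open CategoryTheory CategoryTheory.Limits CategoryTheory.MonoidalCategory

universe v u v₂ u₂

namespace Paper.ModelStructure

section Helpers

variable {C : Type u} [Category.{v} C] (m : Paper.ModelStructure C)

theorem exists_lift {A B X Y : C} {i : A ⟶ B} {p : X ⟶ Y} (h : HasLiftingProperty i p)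
    (a : A ⟶ X) (b : B ⟶ Y) (w : a ≫ p = i ≫ b) : ∃ l : B ⟶ X, i ≫ l = a ∧ l ≫ p = b := by
  have sq : CommSq a i p b := ⟨w⟩
  exact ⟨sq.lift, sq.fac_left, sq.fac_right⟩

theorem isRetractOf_left {A B Z : C} {f : A ⟶ B} {i : A ⟶ Z} {p : Z ⟶ B} (e : i ≫ p = f)
    (h : HasLiftingProperty f p) : IsRetractOf f i := by
  obtain ⟨l, h1, h2⟩ := exists_lift h i (𝟙 B) (by simp [e])
  exact ⟨𝟙 A, 𝟙 A, l, p, by simp, h2, by simp [h1], by simp [e]⟩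

theorem isRetractOf_right {A B Z : C} {f : A ⟶ B} {i : A ⟶ Z} {p : Z ⟶ B} (e : i ≫ p = f)
    (h : HasLiftingProperty i f) : IsRetractOf f p := by
  obtain ⟨l, h1, h2⟩ := exists_lift h (𝟙 A) p (by simp [e])
  exact ⟨i, l, 𝟙 B, 𝟙 B, h1, by simp, by simp [e], by simp [h2]⟩

theorem cof_of_llp {A B : C} (f : A ⟶ B)
    (h : ∀ ⦃X Y : C⦄ (p : X ⟶ Y), m.TrivFib p → HasLiftingProperty f p) : m.Cof f := by
  obtain ⟨Z, i, p, hi, hp, hw, e⟩ := m.factor_Cof_TrivFib f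
  exact m.retract_Cof (isRetractOf_left e (h p ⟨hp, hw⟩)) hi

theorem trivCof_of_llp {A B : C} (f : A ⟶ B)
    (h : ∀ ⦃X Y : C⦄ (p : X ⟶ Y), m.Fib p → HasLiftingProperty f p) : m.TrivCof f := by
  obtain ⟨Z, i, p, hi, hw, hp, e⟩ := m.factor_TrivCof_Fib f
  have r := isRetractOf_left e (h p hp)
  exact ⟨m.retract_Cof r hi, m.retract_W r hw⟩

theorem fib_of_rlp {A B : C} (f : A ⟶ B)
    (h : ∀ ⦃X Y : C⦄ (i : X ⟶ Y), m.TrivCof i → HasLiftingProperty i f) : m.Fib f := by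
  obtain ⟨Z, i, p, hi, hw, hp, e⟩ := m.factor_TrivCof_Fib f
  exact m.retract_Fib (isRetractOf_right e (h i ⟨hi, hw⟩)) hp

theorem trivFib_of_rlp {A B : C} (f : A ⟶ B)
    (h : ∀ ⦃X Y : C⦄ (i : X ⟶ Y), m.Cof i → HasLiftingProperty i f) : m.TrivFib f := by
  obtain ⟨Z, i, p, hi, hp, hw, e⟩ := m.factor_Cof_TrivFib f
  have r := isRetractOf_right e (h i hi)
  exact ⟨m.retract_Fib r hp, m.retract_W r hw⟩

theorem cof_comp {X Y Z : C} (f : X ⟶ Y) (g : Y ⟶ Z) (hf : m.Cof f) (hg : m.Cof g) :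
    m.Cof (f ≫ g) := by
  refine m.cof_of_llp _ fun A B p hp => ?_
  have := m.lift_Cof_TrivFib f p hf hp.1 hp.2
  have := m.lift_Cof_TrivFib g p hg hp.1 hp.2
  infer_instance

theorem fib_comp {X Y Z : C} (f : X ⟶ Y) (g : Y ⟶ Z) (hf : m.Fib f) (hg : m.Fib g) :
    m.Fib (f ≫ g) := by
  refine m.fib_of_rlp _ fun A B i hi => ?_
  have := m.lift_TrivCof_Fib i f hi.1 hi.2 hf
  have := m.lift_TrivCof_Fib i g hi.1 hi.2 hg
  infer_instance

/-- A map with the left lifting property against fibrations between fibrant objects is a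
weak equivalence. -/
theorem W_of_llp [HasTerminal C] {X Y : C} (f : X ⟶ Y)
    (h : ∀ ⦃A B : C⦄ (p : A ⟶ B), m.Fibrant A → m.Fibrant B → m.Fib p →
      HasLiftingProperty f p) : m.W f := by
  obtain ⟨Y', j, q, hj, hjw, hq, -⟩ := m.factor_TrivCof_Fib (terminal.from Y)
  obtain ⟨X', k, p, hk, hkw, hp, e⟩ := m.factor_TrivCof_Fib (f ≫ j)
  have hY' : m.Fibrant Y' := by
    have : q = terminal.from Y' := Subsingleton.elim _ _
    have hh := hq
    rwa [this] at hh
  have hX' : m.Fibrant X' := by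
    have : p ≫ terminal.from Y' = terminal.from X' := Subsingleton.elim _ _
    have hh := m.fib_comp _ _ hp hY'
    rwa [this] at hh
  obtain ⟨l, h1, h2⟩ := exists_lift (h p hX' hY' hp) k j e
  obtain ⟨s, h3, h4⟩ := exists_lift (m.lift_TrivCof_Fib j p hj hjw hp) l (𝟙 Y') (by simp [h2])
  have he : k ≫ (p ≫ s) = k := by
    rw [← Category.assoc, e, Category.assoc, h3, h1]
  have hew : m.W (p ≫ s) := (m.two_out_of_three k (p ≫ s)).2.1 hkw (by rwa [he])
  have hpw : m.W p :=
    m.retract_W ⟨𝟙 _, 𝟙 _, s, p, by simp, h4, by simp, by simp [h4]⟩ hew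
  have hlw : m.W l := (m.two_out_of_three l p).2.2 hpw (by rwa [h2])
  exact (m.two_out_of_three f l).2.2 hlw (by rwa [h1])

/-- A map with the right lifting property against cofibrations between cofibrant objects is a
weak equivalence. -/
theorem W_of_rlp [HasInitial C] {X Y : C} (f : X ⟶ Y)
    (h : ∀ ⦃A B : C⦄ (i : A ⟶ B), m.Cofibrant A → m.Cofibrant B → m.Cof i →
      HasLiftingProperty i f) : m.W f := by
  obtain ⟨X', q, j, hq, hj, hjw, -⟩ := m.factor_Cof_TrivFib (initial.to X)
  obtain ⟨Y', c, k, hc, hk, hkw, e⟩ := m.factor_Cof_TrivFib (j ≫ f)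
  have hX' : m.Cofibrant X' := by
    have : q = initial.to X' := Subsingleton.elim _ _
    have hh := hq
    rwa [this] at hh
  have hY' : m.Cofibrant Y' := by
    have : initial.to X' ≫ c = initial.to Y' := Subsingleton.elim _ _
    have hh := m.cof_comp _ _ hX' hc
    rwa [this] at hh
  obtain ⟨l, h1, h2⟩ := exists_lift (h c hX' hY' hc) j k e.symm
  obtain ⟨s, h3, h4⟩ := exists_lift (m.lift_Cof_TrivFib c j hc hj hjw) (𝟙 X') l (by simp [h1])
  have he : (s ≫ c) ≫ k = k := by
    rw [Category.assoc, e, ← Category.assoc, h4, h2]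
  have hew : m.W (s ≫ c) := (m.two_out_of_three (s ≫ c) k).2.2 hkw (by rwa [he])
  have hcw : m.W c :=
    m.retract_W ⟨c, s, 𝟙 _, 𝟙 _, h3, by simp, by rw [← Category.assoc, h3]; simp, by simp⟩ hew
  have hlw : m.W l := (m.two_out_of_three c l).2.1 hcw (by rwa [h1])
  exact (m.two_out_of_three l f).2.1 hlw (by rwa [h2])

end Helpers

end Paper.ModelStructure

/-- Dugger's lemma: For an adjoint pair `L ⊣ R` between model categories,
the following are equivalent: (i) `L` preserves cofibrations and trivial cofibrations;
(ii) `L` preserves cofibrations between cofibrant objects and all trivial cofibrations;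
(iii) `R` preserves fibrations between fibrant objects and all trivial fibrations. -/
theorem statement9 {M : Type u} [Category.{v} M] {N : Type u₂} [Category.{v₂} N]
    [Limits.HasLimits M] [Limits.HasColimits M] [Limits.HasLimits N] [Limits.HasColimits N]
    (mM : Paper.ModelStructure M) (mN : Paper.ModelStructure N)
    (L : M ⥤ N) (R : N ⥤ M) (adj : L ⊣ R) :
    (((∀ ⦃A B : M⦄ (f : A ⟶ B), mM.Cof f → mN.Cof (L.map f)) ∧
        (∀ ⦃A B : M⦄ (f : A ⟶ B), mM.TrivCof f → mN.TrivCof (L.map f))) ↔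
      ((∀ ⦃A B : M⦄ (f : A ⟶ B), mM.Cofibrant A → mM.Cofibrant B → mM.Cof f →
          mN.Cof (L.map f)) ∧
        (∀ ⦃A B : M⦄ (f : A ⟶ B), mM.TrivCof f → mN.TrivCof (L.map f)))) ∧
    (((∀ ⦃A B : M⦄ (f : A ⟶ B), mM.Cofibrant A → mM.Cofibrant B → mM.Cof f →
          mN.Cof (L.map f)) ∧
        (∀ ⦃A B : M⦄ (f : A ⟶ B), mM.TrivCof f → mN.TrivCof (L.map f))) ↔
      ((∀ ⦃X Y : N⦄ (p : X ⟶ Y), mN.Fibrant X → mN.Fibrant Y → mN.Fib p →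
          mM.Fib (R.map p)) ∧
        (∀ ⦃X Y : N⦄ (p : X ⟶ Y), mN.TrivFib p → mM.TrivFib (R.map p)))) := by
  -- adjoint transfer of lifting properties
  have fibOf : (∀ ⦃A B : M⦄ (f : A ⟶ B), mM.TrivCof f → mN.TrivCof (L.map f)) →
      ∀ ⦃X Y : N⦄ (p : X ⟶ Y), mN.Fib p → mM.Fib (R.map p) := fun h X Y p hp =>
    mM.fib_of_rlp _ fun A B i hi => (adj.hasLiftingProperty_iff i p).1
      (mN.lift_TrivCof_Fib _ _ (h i hi).1 (h i hi).2 hp)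
  have cofOf : (∀ ⦃X Y : N⦄ (p : X ⟶ Y), mN.TrivFib p → mM.TrivFib (R.map p)) →
      ∀ ⦃A B : M⦄ (f : A ⟶ B), mM.Cof f → mN.Cof (L.map f) := fun h A B f hf =>
    mN.cof_of_llp _ fun X Y p hp => (adj.hasLiftingProperty_iff f p).2
      (mM.lift_Cof_TrivFib _ _ hf (h p hp).1 (h p hp).2)
  -- (ii) gives preservation of trivial fibrations
  have key : ((∀ ⦃A B : M⦄ (f : A ⟶ B), mM.Cofibrant A → mM.Cofibrant B → mM.Cof f →
          mN.Cof (L.map f)) ∧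
        (∀ ⦃A B : M⦄ (f : A ⟶ B), mM.TrivCof f → mN.TrivCof (L.map f))) →
      ∀ ⦃X Y : N⦄ (p : X ⟶ Y), mN.TrivFib p → mM.TrivFib (R.map p) := by
    rintro ⟨h1, h2⟩ X Y p hp
    refine ⟨fibOf h2 p hp.1, mM.W_of_rlp _ fun A B i hA hB hi => ?_⟩
    exact (adj.hasLiftingProperty_iff i p).1
      (mN.lift_Cof_TrivFib _ _ (h1 i hA hB hi) hp.1 hp.2)
  refine ⟨⟨fun h => ⟨fun A B f _ _ hf => h.1 f hf, h.2⟩, fun h => ⟨cofOf (key h), h.2⟩⟩,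
    ⟨fun h => ⟨fun X Y p _ _ hp => fibOf h.2 p hp, key h⟩, fun h => ?_⟩⟩
  refine ⟨fun A B f _ _ hf => cofOf h.2 f hf, fun A B f hf => ⟨cofOf h.2 f hf.1, ?_⟩⟩
  refine mN.W_of_llp _ fun X Y p hX hY hp => ?_
  exact (adj.hasLiftingProperty_iff f p).2
    (mM.lift_TrivCof_Fib _ _ hf.1 hf.2 (h.1 p hX hY hp))
end

section
/- Let M be a cocomplete category, H a small filtered category, and I a set of maps of M such that the source and target of every map in I are finitely presentable. Let p : X ⟶ Y be a natural transformation between functors X, Y : H → M such that for every object h of H the component p_h : X(h) → Y(h) has the right lifting property with respect to every map in I. Then the induced map colim_H X → colim_H Y on colimits has the right lifting property with respect to every map in I. -/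
open CategoryTheory CategoryTheory.Limits CategoryTheory.MonoidalCategory

universe v u v₂ u₂

/-- In a cocomplete category, if a natural transformation `p : X ⟶ Y` of
filtered diagrams has all components with the right lifting property with respect to a set
`I` of maps with finitely presentable sources and targets, then the induced map on colimits
also has the right lifting property with respect to every map in `I`. -/
theorem statement10 {M : Type u} [Category.{v} M] [Limits.HasColimits M]
    (H : Type v) [SmallCategory H] [IsFiltered H]
    (I : CategoryTheory.MorphismProperty M)
    (hI : ∀ ⦃A B : M⦄ (i : A ⟶ B), I i →
      Paper.FinitelyPresentable A ∧ Paper.FinitelyPresentable B)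
    (X Y : H ⥤ M) (p : X ⟶ Y)
    (hp : ∀ (h : H) ⦃A B : M⦄ (i : A ⟶ B), I i → HasLiftingProperty i (p.app h)) :
    ∀ ⦃A B : M⦄ (i : A ⟶ B), I i → HasLiftingProperty i (Limits.colimMap p) := by
  intro A B i hi
  have key : ∀ A : M, Paper.FinitelyPresentable A → IsFinitelyPresentable.{v} A := by
    intro A hA
    rw [isFinitelyPresentable_iff_preservesFilteredColimitsOfSize]
    exact ⟨fun J _ _ => (hA J _ inferInstance).some⟩
  haveI := key A (hI i hi).1
  haveI := key B (hI i hi).2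
  constructor
  intro f g sq
  have hw := sq.w
  obtain ⟨j, a, ha⟩ := IsFinitelyPresentable.exists_hom_of_isColimit (colimit.isColimit X) f
  obtain ⟨k, b, hb⟩ := IsFinitelyPresentable.exists_hom_of_isColimit (colimit.isColimit Y) g
  dsimp at ha hb
  have e : (a ≫ p.app j) ≫ (colimit.cocone Y).ι.app j =
      (i ≫ b) ≫ (colimit.cocone Y).ι.app k := by
    dsimp
    rw [Category.assoc, Category.assoc, hb, ← hw, ← ha, Category.assoc, ι_colimMap]
  obtain ⟨l, u, w, hl⟩ := IsFinitelyPresentable.exists_eq_of_isColimit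
    (colimit.isColimit Y) _ _ e
  have sq' : CommSq (a ≫ X.map u) i (p.app l) (b ≫ Y.map w) :=
    ⟨by simpa using hl⟩
  haveI := hp l i hi
  refine ⟨⟨⟨sq'.lift ≫ colimit.ι X l, ?_, ?_⟩⟩⟩
  · rw [← Category.assoc, sq'.fac_left, Category.assoc, colimit.w, ha]
  · rw [Category.assoc, ι_colimMap, ← Category.assoc, sq'.fac_right, Category.assoc,
      colimit.w, hb]
end

section
/- Let M be a cofibrantly generated model category, with a generating set I of cofibrations and a generating set J of trivial cofibrations (so that the trivial fibrations are exactly the maps with the right lifting property with respect to I, the fibrations are exactly those with the right lifting property with respect to J, and the small object argument applies to I and J). Suppose the source and target of every map in I are finitely presentable. Then for every small filtered category H and every natural transformation p : X ⟶ Y between functors X, Y : H → M whose components are all weak equivalences (respectively, all trivial fibrations), the induced map colim_H X → colim_H Y is a weak equivalence (respectively, a trivial fibration). -/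
open CategoryTheory CategoryTheory.Limits CategoryTheory.MonoidalCategory

universe v u v₂ u₂

namespace Paper

section CellFunctor

variable {M : Type u} [Category.{v} M] [Limits.HasColimits M]
variable {K : Type v} [PartialOrder K] {r : K → ℕ} {n : ℕ}

/-- The free diagram on a family of objects placed at the elements of rank `n`. -/
noncomputable def cellFunctor (W : {k : K // r k = n} → M) : K ⥤ M where
  obj j := ∐ fun s : {s : {k : K // r k = n} // s.1 ≤ j} => W s.1
  map {j j'} h := Sigma.desc fun s =>
    Sigma.ι (fun s : {s : {k : K // r k = n} // s.1 ≤ j'} => W s.1)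
      ⟨s.1, s.2.trans (leOfHom h)⟩
  map_id j := by
    apply Sigma.hom_ext
    intro s
    simp
  map_comp f g := by
    apply Sigma.hom_ext
    intro s
    simp

/-- The inclusion of the free generators. -/
noncomputable def cellIncl (W : {k : K // r k = n} → M) (s : {k : K // r k = n}) :
    W s ⟶ (cellFunctor W).obj s.1 :=
  Sigma.ι (fun s' : {s' : {k : K // r k = n} // s'.1 ≤ s.1} => W s'.1) ⟨s, le_rfl⟩

/-- The universal property of `cellFunctor`: existence. -/
noncomputable def cellDesc {W : {k : K // r k = n} → M} {Z : K ⥤ M}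
    (φ : ∀ s, W s ⟶ Z.obj s.1) : cellFunctor W ⟶ Z where
  app j := Sigma.desc fun s => φ s.1 ≫ Z.map (homOfLE s.2)
  naturality j j' h := by
    apply Sigma.hom_ext
    intro s
    simp only [cellFunctor, Sigma.ι_desc_assoc, Sigma.ι_desc, Category.assoc, ← Z.map_comp]
    rfl

lemma cellIncl_desc {W : {k : K // r k = n} → M} {Z : K ⥤ M}
    (φ : ∀ s, W s ⟶ Z.obj s.1) (s : {k : K // r k = n}) :
    cellIncl W s ≫ (cellDesc φ).app s.1 = φ s := by
  refine (Sigma.ι_desc (f := fun s' : {s' : {k : K // r k = n} // s'.1 ≤ s.1} => W s'.1)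
    (fun s' => φ s'.1 ≫ Z.map (homOfLE s'.2)) ⟨s, le_rfl⟩).trans ?_
  exact (congrArg (φ s ≫ ·) (Z.map_id s.1)).trans (Category.comp_id _)

lemma cell_hom_ext {W : {k : K // r k = n} → M} {Z : K ⥤ M} {f g : cellFunctor W ⟶ Z}
    (h : ∀ s, cellIncl W s ≫ f.app s.1 = cellIncl W s ≫ g.app s.1) : f = g := by
  apply NatTrans.ext
  funext j
  apply Sigma.hom_ext
  intro s
  have e : Sigma.ι (fun s : {s : {k : K // r k = n} // s.1 ≤ j} => W s.1) s =
      cellIncl W s.1 ≫ (cellFunctor W).map (homOfLE s.2) := by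
    simp [cellIncl, cellFunctor]
  have e2 : ∀ f : cellFunctor W ⟶ Z,
      (cellIncl W s.1 ≫ (cellFunctor W).map (homOfLE s.2)) ≫ f.app j =
        (cellIncl W s.1 ≫ f.app s.1.1) ≫ Z.map (homOfLE s.2) := fun f => by
    rw [Category.assoc, f.naturality, Category.assoc]
  refine ((congrArg (· ≫ f.app j) e).trans ?_).trans (congrArg (· ≫ g.app j) e).symm
  refine (e2 f).trans (Eq.trans ?_ (e2 g).symm)
  rw [h]

/-- Functoriality of `cellFunctor`. -/
noncomputable def cellMap {W W' : {k : K // r k = n} → M} (f : ∀ s, W s ⟶ W' s) :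
    cellFunctor W ⟶ cellFunctor W' :=
  cellDesc fun s => f s ≫ cellIncl W' s

/-- Pointwise class of maps. -/
def Ptwise (R : MorphismProperty M) (K : Type v) [PartialOrder K] : MorphismProperty (K ⥤ M) :=
  fun _ _ p => ∀ k, R (p.app k)

lemma cellMap_llp (R : MorphismProperty M) {W W' : {k : K // r k = n} → M}
    (f : ∀ s, W s ⟶ W' s) (hf : ∀ s, R.llp (f s)) : (Ptwise R K).llp (cellMap f) := by
  intro E B p hp
  refine ⟨fun {a b} sq => ?_⟩
  have sqs : ∀ s, CommSq (cellIncl W s ≫ a.app s.1) (f s) (p.app s.1)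
      (cellIncl W' s ≫ b.app s.1) := fun s => ⟨by
    have := congrArg (fun t => cellIncl W s ≫ t.app s.1) sq.w
    simp only [NatTrans.comp_app, cellMap] at this
    rw [reassoc_of% cellIncl_desc] at this
    simpa using this⟩
  have hl : ∀ s, (sqs s).HasLift := fun s => (hf s (p.app s.1) (hp s.1)).sq_hasLift (sqs s)
  refine ⟨⟨⟨cellDesc fun s => (sqs s).lift, ?_, ?_⟩⟩⟩
  · apply cell_hom_ext
    intro s
    simp only [NatTrans.comp_app, cellMap]
    rw [reassoc_of% cellIncl_desc]
    simp [cellIncl_desc]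
  · apply cell_hom_ext
    intro s
    simp only [NatTrans.comp_app]
    rw [reassoc_of% cellIncl_desc]
    simp

lemma cellMap_isIso {W W' : {k : K // r k = n} → M} (hr : StrictMono r)
    (f : ∀ s, W s ⟶ W' s) (j : K) (hj : r j < n) : IsIso ((cellMap f).app j) := by
  have he : ∀ s : {s : {k : K // r k = n} // s.1 ≤ j}, False := fun s => by
    have := hr.monotone s.2
    have := s.1.2
    omega
  refine ⟨Sigma.desc (fun s => (he s).elim), ?_, ?_⟩
  · apply Sigma.hom_ext
    intro s
    exact (he s).elim
  · apply Sigma.hom_ext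
    intro s
    exact (he s).elim

lemma isIso_ι_unique {β : Type v} (F : β → M) (b : β) (hb : ∀ b', b' = b) :
    IsIso (Sigma.ι F b) := by
  refine ⟨Sigma.desc (fun b' => eqToHom (by rw [hb b'])), ?_, ?_⟩
  · simp
  · apply Sigma.hom_ext
    intro b'
    obtain rfl := hb b'
    simp

lemma cellIncl_isIso (W : {k : K // r k = n} → M) (hr : StrictMono r) (s : {k : K // r k = n}) :
    IsIso (cellIncl W s) := by
  apply isIso_ι_unique
  rintro ⟨⟨k, hk⟩, h⟩
  obtain ⟨k', hk'⟩ := s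
  rcases h.eq_or_lt with h | h
  · exact Subtype.ext (Subtype.ext h)
  · have := hr h
    dsimp only at this
    omega

end CellFunctor

section Step

/-- A diagram together with a map to `Y`. -/
structure Stage {D : Type u} [Category.{v} D] (Y : D) where
  /-- the source -/
  left : D
  /-- the map -/
  hom : left ⟶ Y

variable {M : Type u} [Category.{v} M] [Limits.HasColimits M]
variable {K : Type v} [PartialOrder K] {r : K → ℕ}

lemma step (R : MorphismProperty M) [R.RespectsIso]
    (fact : ∀ ⦃X Y : M⦄ (f : X ⟶ Y), ∃ (Z : M) (i : X ⟶ Z) (q : Z ⟶ Y),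
      R.llp i ∧ R q ∧ i ≫ q = f) (hr : StrictMono r) (n : ℕ)
    {Z Y : K ⥤ M} (q : Z ⟶ Y) :
    ∃ (Z' : K ⥤ M) (i : Z ⟶ Z') (q' : Z' ⟶ Y), i ≫ q' = q ∧ (Ptwise R K).llp i ∧
      (∀ k, r k = n → R (q'.app k)) ∧ (∀ k, r k < n → IsIso (i.app k)) := by
  choose V i w hi hw hfac using
    fun s : {k : K // r k = n} => fact (q.app s.1)
  let α : cellFunctor (fun s : {k : K // r k = n} => Z.obj s.1) ⟶ Z := cellDesc fun s => 𝟙 _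
  let β := cellMap i
  have comm : α ≫ q = β ≫ cellDesc w := by
    apply cell_hom_ext
    intro s
    simp only [α, β, cellMap, NatTrans.comp_app]
    rw [reassoc_of% cellIncl_desc, reassoc_of% cellIncl_desc, Category.assoc,
      cellIncl_desc, hfac]
    exact Category.id_comp _
  have po : IsPushout α β (pushout.inl α β) (pushout.inr α β) := IsPushout.of_hasPushout α β
  refine ⟨pushout α β, pushout.inl α β, pushout.desc q (cellDesc w) comm, pushout.inl_desc _ _ _,
    (Ptwise R K).llp.of_isPushout po (cellMap_llp R i hi), ?_, ?_⟩
  · intro k hk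
    have pok := po.map ((evaluation K M).obj k)
    have h1 := cellIncl_isIso (fun s : {k : K // r k = n} => Z.obj s.1) hr ⟨k, hk⟩
    have h2 : IsIso (α.app k) := by
      have := cellIncl_desc (Z := Z) (fun s : {k : K // r k = n} => 𝟙 (Z.obj s.1)) ⟨k, hk⟩
      have h : IsIso (cellIncl (fun s : {k : K // r k = n} => Z.obj s.1) ⟨k, hk⟩ ≫ α.app k) := by
        rw [this]; infer_instance
      exact @IsIso.of_isIso_comp_left _ _ _ _ _ _ (α.app k) h1 h
    have h3 : IsIso ((pushout.inr α β).app k) := by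
      have : IsIso (((evaluation K M).obj k).map α) := h2
      exact pok.isIso_inr_of_isIso
    have h4 := cellIncl_isIso V hr ⟨k, hk⟩
    have e : (cellIncl V ⟨k, hk⟩ ≫ (pushout.inr α β).app k) ≫
        (pushout.desc q (cellDesc w) comm).app k = w ⟨k, hk⟩ := by
      rw [Category.assoc, ← NatTrans.comp_app, pushout.inr_desc]
      exact cellIncl_desc w ⟨k, hk⟩
    rw [← R.cancel_left_of_respectsIso (cellIncl V ⟨k, hk⟩ ≫ (pushout.inr α β).app k), e]
    exact hw _
  · intro k hk
    have pok := po.map ((evaluation K M).obj k)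
    have : IsIso (((evaluation K M).obj k).map β) := cellMap_isIso hr i k hk
    exact pok.isIso_inl_of_isIso

lemma ptwise_factor (R : MorphismProperty M) [R.RespectsIso]
    (fact : ∀ ⦃X Y : M⦄ (f : X ⟶ Y), ∃ (Z : M) (i : X ⟶ Z) (q : Z ⟶ Y),
      R.llp i ∧ R q ∧ i ≫ q = f) (hr : StrictMono r)
    {X Y : K ⥤ M} (p : X ⟶ Y) :
    ∃ (Z : K ⥤ M) (i : X ⟶ Z) (q : Z ⟶ Y), i ≫ q = p ∧ (Ptwise R K).llp i ∧
      Ptwise R K q := by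
  choose Z' i' q' hfac hllp hR hiso using
    fun (n : ℕ) (Z : Stage Y) => step (r := r) R fact hr n Z.hom
  let T : ℕ → Stage Y := fun n => Nat.rec (Stage.mk X p) (fun n Z => Stage.mk (Z' n Z) (q' n Z)) n
  let f : ∀ n, (T n).left ⟶ (T (n + 1)).left := fun n => i' n (T n)
  have hf : ∀ n, f n ≫ (T (n + 1)).hom = (T n).hom := fun n => hfac n (T n)
  let F : ℕ ⥤ (K ⥤ M) := Functor.ofSequence f
  have hFs : ∀ n, F.map (homOfLE (Nat.le_add_right n 1)) = f n :=
    Functor.ofSequence_map_homOfLE_succ f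
  have : HasColimitsOfSize.{0, 0} M := hasColimitsOfSizeShrink.{0, 0} M
  let c : Cocone F := ⟨Y, NatTrans.ofSequence (fun n => (T n).hom) (fun n => by
    rw [hFs]; exact (hf n).trans (Category.comp_id _).symm)⟩
  have hc := colimit.isColimit F
  refine ⟨colimit F, colimit.ι F 0, colimit.desc F c, (colimit.ι_desc c 0), ?_, ?_⟩
  · intro E B g hg
    refine HasLiftingProperty.transfiniteComposition.hasLiftingProperty_ι_app_bot
      (c := colimit.cocone F) hc ?_
    intro j _
    have := hllp j (T j) g hg
    have e : F.map (homOfLE (Order.le_succ j)) = i' j (T j) := hFs j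
    rw [e]
    exact this
  · intro k
    have hconst : (F ⋙ (evaluation K M).obj k).IsEventuallyConstantFrom (r k + 1) := by
      intro j g
      have : ∀ d, IsIso ((F.map (homOfLE (Nat.le_add_right (r k + 1) d))).app k) := by
        intro d
        induction d with
        | zero =>
          have : homOfLE (Nat.le_add_right (r k + 1) 0) = 𝟙 (r k + 1) := rfl
          rw [this, F.map_id]
          infer_instance
        | succ d ih =>
          have e : homOfLE (Nat.le_add_right (r k + 1) (d + 1)) =
            homOfLE (Nat.le_add_right (r k + 1) d) ≫
              homOfLE (Nat.le_add_right (r k + 1 + d) 1) := rfl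
          have : IsIso ((f (r k + 1 + d)).app k) := hiso _ _ k (by omega)
          rw [e, F.map_comp, hFs]
          exact IsIso.comp_isIso' ih this
      obtain ⟨d, rfl⟩ := Nat.exists_eq_add_of_le (leOfHom g)
      exact this d
    have h1 : IsIso ((colimit.ι F (r k + 1)).app k) :=
      hconst.isIso_ι_of_isColimit (isColimitOfPreserves ((evaluation K M).obj k) hc)
    rw [← R.cancel_left_of_respectsIso ((colimit.ι F (r k + 1)).app k), ← NatTrans.comp_app,
      colimit.ι_desc]
    exact hR (r k) (T (r k)) k rfl

end Step


section Final

/-- Every small filtered category receives a final functor from a directed poset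
graded by the natural numbers. -/
lemma exists_graded (H : Type v) [SmallCategory H] [IsFiltered H] :
    ∃ (K : Type v) (_ : PartialOrder K) (_ : IsFiltered K) (r : K → ℕ) (F : K ⥤ H),
      StrictMono r ∧ F.Final := by
  classical
  obtain ⟨α, _, _, _, G, hG⟩ := IsFiltered.exists_directed H
  have ub : ∀ (s : Finset α), ∃ a, ∀ b ∈ s, b ≤ a := fun s => s.exists_le
  choose u hu using ub
  let f : Finset α → α := fun s => Finset.strongInductionOn s
    fun s ih => u (s ∪ s.ssubsets.attach.image fun t => ih t.1 (Finset.mem_ssubsets.1 t.2))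
  have hf : ∀ s, f s = u (s ∪ s.ssubsets.attach.image fun t => f t.1) := fun s =>
    Finset.strongInductionOn_eq s _
  have h1 : ∀ s, ∀ a ∈ s, a ≤ f s := fun s a ha => by
    rw [hf]
    exact hu _ _ (Finset.mem_union_left _ ha)
  have h2 : Monotone f := by
    intro s t hst
    rcases hst.eq_or_lt with h | h
    · rw [h]
    · rw [hf t]
      refine hu _ _ (Finset.mem_union_right _ ?_)
      exact Finset.mem_image.2 ⟨⟨s, Finset.mem_ssubsets.2 h⟩, Finset.mem_attach _ _, rfl⟩
  have h3 : h2.functor.Final := by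
    rw [Monotone.final_functor_iff]
    intro a
    exact ⟨{a}, h1 _ _ (Finset.mem_singleton_self a)⟩
  exact ⟨Finset α, inferInstance, inferInstance, Finset.card, h2.functor ⋙ G,
    Finset.card_strictMono, inferInstance⟩

variable {M : Type u} [Category.{v} M] [Limits.HasColimits M]

lemma rlp_filtered (I : MorphismProperty M)
    (hI : ∀ ⦃A B : M⦄ (i : A ⟶ B), I i → FinitelyPresentable A ∧ FinitelyPresentable B)
    {H : Type v} [SmallCategory H] [IsFiltered H] {X Y : H ⥤ M} (p : X ⟶ Y)
    (hp : ∀ h, I.rlp (p.app h)) : I.rlp (colimMap p) := by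
  intro A B i hi
  obtain ⟨⟨_⟩, ⟨_⟩⟩ : Nonempty (PreservesColimitsOfShape H (coyoneda.obj (Opposite.op A))) ∧
    Nonempty (PreservesColimitsOfShape H (coyoneda.obj (Opposite.op B))) :=
    ⟨(hI i hi).1 H _ inferInstance, (hI i hi).2 H _ inferInstance⟩
  refine ⟨fun {a b} sq => ?_⟩
  obtain ⟨h1, a', ha⟩ := exists_hom_of_preservesColimit_coyoneda (colimit.isColimit X) a
  obtain ⟨h2, b', hb⟩ := exists_hom_of_preservesColimit_coyoneda (colimit.isColimit Y) b
  dsimp only [colimit.cocone_ι] at ha hb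
  obtain ⟨k, s, t, hst⟩ := exists_eq_of_preservesColimit_coyoneda (colimit.isColimit Y)
    (a' ≫ p.app h1) (i ≫ b') (by
      dsimp only [colimit.cocone_ι]
      rw [Category.assoc, Category.assoc, hb, ← sq.w, ← ha, Category.assoc, ι_colimMap])
  have sq' : CommSq (a' ≫ X.map s) i (p.app k) (b' ≫ Y.map t) := ⟨by
    rw [Category.assoc, p.naturality, ← Category.assoc, hst, Category.assoc]⟩
  have : sq'.HasLift := (hp k i hi).sq_hasLift sq'
  refine ⟨⟨⟨sq'.lift ≫ colimit.ι X k, ?_, ?_⟩⟩⟩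
  · rw [sq'.fac_left_assoc, Category.assoc, colimit.w, ha]
  · rw [Category.assoc, ι_colimMap, sq'.fac_right_assoc, Category.assoc, colimit.w, hb]

lemma llp_colimMap (R : MorphismProperty M) {K : Type v} [PartialOrder K] {X Y : K ⥤ M}
    (i : X ⟶ Y) (hi : (Ptwise R K).llp i) : R.llp (colimMap i) := by
  intro E B g hg
  have := (colimConstAdj (J := K) (C := M)).hasLiftingProperty_iff i g
  exact this.2 (hi _ fun _ => hg)

lemma rlp_pi (J : MorphismProperty M) [HasLimits M] (β : Type v) {E B : M} (g : E ⟶ B)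
    (hg : J.rlp g) :
    J.rlp (Pi.lift (fun l => Pi.π (fun _ : β => E) l ≫ g) :
      (∏ᶜ fun _ : β => E) ⟶ ∏ᶜ fun _ : β => B) := by
  intro A C j hj
  refine ⟨fun {a b} sq => ?_⟩
  have sqs : ∀ l : β, CommSq (a ≫ Pi.π (fun _ : β => E) l) j g
      (b ≫ Pi.π (fun _ : β => B) l) := fun l => ⟨by
    have := congrArg (· ≫ Pi.π (fun _ : β => B) l) sq.w
    simpa using this⟩
  have hl : ∀ l, (sqs l).HasLift := fun l => (hg j hj).sq_hasLift (sqs l)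
  refine ⟨⟨⟨Pi.lift fun l => (sqs l).lift, ?_, ?_⟩⟩⟩
  · apply Pi.hom_ext
    intro l
    simp
  · apply Pi.hom_ext
    intro l
    simp

lemma llp_app (J : MorphismProperty M) [HasLimits M] {K : Type v} [PartialOrder K] {X Y : K ⥤ M}
    (i : X ⟶ Y) (hi : (Ptwise J.rlp K).llp i) (k : K) : J.rlp.llp (i.app k) := by
  intro E B g hg
  exact ((evaluationAdjunctionLeft M k).hasLiftingProperty_iff i g).2
    (hi _ fun t => rlp_pi J (t ⟶ k) g hg)

/-- Maps with the left lifting property against fibrations are weak equivalences. -/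
lemma ModelStructure.W_of_llp_s11 (m : ModelStructure M) {A B : M} (i : A ⟶ B) (hi : m.Fib.llp i) :
    m.W i := by
  obtain ⟨Z, j, p, _, hj, hp, fac⟩ := m.factor_TrivCof_Fib i
  have := hi p hp
  have sq : CommSq j i p (𝟙 B) := ⟨by simpa using fac⟩
  exact m.retract_W ⟨𝟙 A, 𝟙 A, sq.lift, p, by simp, by simp, by simp, by simp [fac]⟩ hj

end Final

end Paper

/-- In a cofibrantly generated model category (trivial fibrations are exactly
the maps with RLP w.r.t. `I`, fibrations exactly those with RLP w.r.t. `J`, and the small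
object argument provides factorizations for `I` and `J`) whose generating cofibrations have
finitely presentable sources and targets, weak equivalences and trivial fibrations are
closed under filtered colimits. -/
theorem statement11 {M : Type u} [Category.{v} M] [Limits.HasLimits M] [Limits.HasColimits M]
    (m : Paper.ModelStructure M) (I J : CategoryTheory.MorphismProperty M)
    (hTrivFib : ∀ ⦃A B : M⦄ (f : A ⟶ B), m.TrivFib f ↔ Paper.RLP I f)
    (hFib : ∀ ⦃A B : M⦄ (f : A ⟶ B), m.Fib f ↔ Paper.RLP J f)
    (soaI : ∀ ⦃X Y : M⦄ (f : X ⟶ Y), ∃ (Z : M) (i : X ⟶ Z) (q : Z ⟶ Y),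
      Paper.LLP (Paper.RLP I) i ∧ Paper.RLP I q ∧ i ≫ q = f)
    (soaJ : ∀ ⦃X Y : M⦄ (f : X ⟶ Y), ∃ (Z : M) (i : X ⟶ Z) (q : Z ⟶ Y),
      Paper.LLP (Paper.RLP J) i ∧ Paper.RLP J q ∧ i ≫ q = f)
    (hI : ∀ ⦃A B : M⦄ (i : A ⟶ B), I i →
      Paper.FinitelyPresentable A ∧ Paper.FinitelyPresentable B)
    (H : Type v) [SmallCategory H] [IsFiltered H]
    (X Y : H ⥤ M) (p : X ⟶ Y) :
    ((∀ h : H, m.W (p.app h)) → m.W (Limits.colimMap p)) ∧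
    ((∀ h : H, m.TrivFib (p.app h)) → m.TrivFib (Limits.colimMap p)) := by
  have key : ∀ (H : Type v) [SmallCategory H] [IsFiltered H] (X Y : H ⥤ M) (p : X ⟶ Y),
      (∀ h : H, m.TrivFib (p.app h)) → m.TrivFib (Limits.colimMap p) := by
    intro H _ _ X Y p hp
    rw [hTrivFib]
    exact Paper.rlp_filtered I hI p fun h => (hTrivFib _).1 (hp h)
  refine ⟨fun hp => ?_, key H X Y p⟩
  have hFibEq : m.Fib = J.rlp := by
    ext A B f
    exact hFib f
  obtain ⟨K, _, _, r, F, hr, _⟩ := Paper.exists_graded H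
  obtain ⟨Z, i, q, fac, hi, hq⟩ := Paper.ptwise_factor (K := K) J.rlp
    (fun A B f => by
      obtain ⟨Z, i, q, hc, hw, hq, fac⟩ := m.factor_TrivCof_Fib f
      refine ⟨Z, i, q, ?_, (hFib q).1 hq, fac⟩
      intro E B g hg
      exact m.lift_TrivCof_Fib i g hc hw ((hFib g).2 hg)) hr (Functor.whiskerLeft F p)
  have hWi : ∀ k, m.W (i.app k) := fun k =>
    m.W_of_llp_s11 _ (by rw [hFibEq]; exact Paper.llp_app J i hi k)
  have hWq : ∀ k, m.W (q.app k) := fun k =>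
    (m.two_out_of_three (i.app k) (q.app k)).2.1 (hWi k) (by
      rw [← NatTrans.comp_app, fac]
      exact hp (F.obj k))
  have h1 : m.W (colimMap i) :=
    m.W_of_llp_s11 _ (by rw [hFibEq]; exact Paper.llp_colimMap _ i hi)
  have h2 : m.W (colimMap q) := (key K _ _ q fun k => ⟨(hFib _).2 (hq k), hWq k⟩).2
  have h3 : m.W (colimMap (Functor.whiskerLeft F p)) := by
    have e : colimMap (Functor.whiskerLeft F p) = colimMap i ≫ colimMap q := by
      rw [← fac]
      apply colimit.hom_ext
      intro k
      simp
    rw [e]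
    exact (m.two_out_of_three _ _).1 h1 h2
  refine m.retract_W ⟨(Functor.Final.colimitIso F X).inv, (Functor.Final.colimitIso F X).hom,
    (Functor.Final.colimitIso F Y).inv, (Functor.Final.colimitIso F Y).hom, by simp, by simp,
    ?_, ?_⟩ h3
  · rw [Iso.inv_comp_eq, ← Category.assoc, Iso.eq_comp_inv]
    apply colimit.hom_ext
    intro k
    simp
  · apply colimit.hom_ext
    intro k
    simp
end
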